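/- Let (A_i)_{i∈I} be unital subalgebras of A and (F_j)_{j∈J} subalgebras of F. Then the pair ((A_i)_{i∈I}, (F_j)_{j∈J}) is B′-free in (A, φ, F, Φ) if and only if the family of unital subalgebras of B consisting of A_i (for i ∈ I) and ℂ·1_B + F_j (for j ∈ J), indexed by the disjoint union I ⊔ J, is infinitesimally free with respect to (φ, φ′). -/

import Mathlib

open scoped BigOperators

namespace TypeBPrime

variable {B : Type*} [Ring B] [Algebra ℂ B]

/-- The alternating word `a 0 * (f 0 * a 1) * ⋯ * (f (n-1) * a n)`. -/
def altWord {n : ℕ} (a : Fin (n + 1) → B) (f : Fin n → B) : B :=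
  a 0 * (List.ofFn fun k : Fin n => f k * a k.succ).prod

/-- Cyclic-antimonotone independence of the pair `(A₁, F₁)` with respect to `(φ, Φ)`:
`Φ(a₀ f₁ a₁ ⋯ fₙ aₙ) = φ(a₀ aₙ) · φ(a₁) ⋯ φ(a_{n-1}) · Φ(f₁ ⋯ fₙ)` for all `n ≥ 1`. -/
def CyclicAntimonotone (φ Φ : B → ℂ) (A₁ F₁ : Set B) : Prop :=
  ∀ n : ℕ, 0 < n → ∀ (a : Fin (n + 1) → B) (f : Fin n → B),
    (∀ k, a k ∈ A₁) → (∀ k, f k ∈ F₁) →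
    Φ (altWord a f) =
      φ (a 0 * a (Fin.last n)) *
        (∏ k ∈ Finset.Ioo (0 : Fin (n + 1)) (Fin.last n), φ (a k)) *
        Φ (List.ofFn f).prod

/-- Freeness of a family of subsets with respect to `φ`:
alternating words in centered elements are centered. -/
def IsFreeFamily {ι : Type*} (φ : B → ℂ) (Alg : ι → Set B) : Prop :=
  ∀ (n : ℕ) (idx : Fin (n + 1) → ι) (a : Fin (n + 1) → B),
    (∀ k : Fin n, idx k.castSucc ≠ idx k.succ) →
    (∀ k, a k ∈ Alg (idx k)) → (∀ k, φ (a k) = 0) →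
    φ (List.ofFn a).prod = 0

/-- Infinitesimal freeness of a family of subsets with respect to `(φ, φ')`. -/
def IsInfFree {ι : Type*} (φ φ' : B → ℂ) (Alg : ι → Set B) : Prop :=
  IsFreeFamily φ Alg ∧
  (∀ (n : ℕ) (idx : Fin (n + 1) → ι) (b : Fin (n + 1) → B),
    (∀ k : Fin n, idx k.castSucc ≠ idx k.succ) →
    (∀ k, b k ∈ Alg (idx k)) → (∀ k, φ (b k) = 0) →
    ¬(Even n ∧ ∀ k, idx k = idx k.rev) →
    φ' (List.ofFn b).prod = 0) ∧
  (∀ (m : ℕ) (idx : Fin (2 * m + 1) → ι) (b : Fin (2 * m + 1) → B),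
    (∀ k : Fin (2 * m), idx k.castSucc ≠ idx k.succ) →
    (∀ k, b k ∈ Alg (idx k)) → (∀ k, φ (b k) = 0) →
    (∀ k, idx k = idx k.rev) →
    φ' (List.ofFn b).prod =
      (∏ j : Fin m,
          φ (b (Fin.castLE (by omega) j) * b (Fin.castLE (by omega) j).rev)) *
        φ' (b ⟨m, by omega⟩))

/-- Trivial independence with respect to `Φ`: alternating words of length `≥ 2` vanish. -/
def TrivIndep {ι : Type*} (Φ : B → ℂ) (Fj : ι → Set B) : Prop :=
  ∀ (n : ℕ) (idx : Fin (n + 2) → ι) (f : Fin (n + 2) → B),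
    (∀ k : Fin (n + 1), idx k.castSucc ≠ idx k.succ) →
    (∀ k, f k ∈ Fj (idx k)) →
    Φ (List.ofFn f).prod = 0

/-- Boolean independence with respect to `ψ`. -/
def BoolIndep {ι : Type*} (ψ : B → ℂ) (C : ι → Set B) : Prop :=
  ∀ (n : ℕ) (idx : Fin (n + 1) → ι) (c : Fin (n + 1) → B),
    (∀ k : Fin n, idx k.castSucc ≠ idx k.succ) →
    (∀ k, c k ∈ C (idx k)) →
    ψ (List.ofFn c).prod = ∏ k, ψ (c k)

/-- Conditional freeness with respect to `(φ, ψ)`. -/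
def CFree {ι : Type*} (φ ψ : B → ℂ) (Alg : ι → Set B) : Prop :=
  IsFreeFamily φ Alg ∧
  ∀ (n : ℕ) (idx : Fin (n + 1) → ι) (b : Fin (n + 1) → B),
    (∀ k : Fin n, idx k.castSucc ≠ idx k.succ) →
    (∀ k, b k ∈ Alg (idx k)) → (∀ k, φ (b k) = 0) →
    ψ (List.ofFn b).prod = ∏ k, ψ (b k)

/-- The unital subspace `ℂ·1_B + F₁`. -/
def unitize (F₁ : Set B) : Set B :=
  {x | ∃ c : ℂ, ∃ f ∈ F₁, x = algebraMap ℂ B c + f}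

/-- The set of alternating words `a₀ f₁ a₁ ⋯ fₙ aₙ` with letters from `A₁` and `F₁`. -/
def wordSet (A₁ F₁ : Set B) : Set B :=
  {x | ∃ n : ℕ, 0 < n ∧ ∃ (a : Fin (n + 1) → B) (f : Fin n → B),
    (∀ k, a k ∈ A₁) ∧ (∀ k, f k ∈ F₁) ∧ x = altWord a f}

/-- `A₁⟨F₁⟩₀`: the linear span of all alternating words `a₀ f₁ a₁ ⋯ fₙ aₙ`. -/
def wordSpan (A₁ F₁ : Set B) : Set B :=
  (Submodule.span ℂ (wordSet A₁ F₁) : Submodule ℂ B)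

/-- The type B′ subalgebra `A₁⟨F₁⟩ = A₁ + A₁⟨F₁⟩₀`. -/
def typeBSub (A₁ F₁ : Set B) : Set B :=
  {x | ∃ a ∈ A₁, ∃ f ∈ wordSpan A₁ F₁, x = a + f}

/-- `(tₙ)` is the inverse Markov–Krein transform of the sequence `(mₙ)`:
`(n+1)·mₙ = Σ_{j=0}^{n} tⱼ m_{n−j}` for all `n ≥ 0`. -/
def IsInvMK (m t : ℕ → ℂ) : Prop :=
  ∀ n : ℕ, ((n : ℂ) + 1) * m n = ∑ j ∈ Finset.range (n + 1), t j * m (n - j)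

/-!
Infinitesimal freeness only tests reduced words `b₁ ⋯ bₙ` in centered letters, and there it says
that the family is free and that `φ'` obeys the Leibniz rule
`φ' (b₁ ⋯ bₙ) = ∑ₖ φ (b₁ ⋯ bₖ₋₁ bₖ₊₁ ⋯ bₙ) φ' (bₖ)`: freeness gives `φ (uv) = 0` for reduced words
`u`, `v` of different lengths, so only the middle letter contributes.

The centered letters of the combined family are the centered elements of the `Aᵢ` and all elements
of the `Fⱼ`. Since `φ` kills the ideal `F` and `φ'` kills `A`, the Leibniz rule becomes: `Φ`
vanishes on reduced words with at least two `F`-letters, and `Φ (u f v) = φ (uv) Φ f` when `f` is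
the only one. Cyclic-antimonotone independence together with trivial independence is the same rule,
because cyclic-antimonotone independence lets an `A`-factor `a` between two `F`-factors be replaced
by the scalar `φ a`, which is zero when `a` is a nonempty reduced word.
-/

section Words

variable {I M : Type*}

/-- Reduced words: every letter is tagged with the index of the set it is taken from, and
neighbouring letters have different indices. -/
def IsReduced (S : I → Set M) (l : List (I × M)) : Prop :=
  (l.map Prod.fst).IsChain (· ≠ ·) ∧ ∀ p ∈ l, p.2 ∈ S p.1

lemma isReduced_nil (S : I → Set M) : IsReduced S [] := by simp [IsReduced]

lemma isReduced_singleton {S : I → Set M} {p : I × M} : IsReduced S [p] ↔ p.2 ∈ S p.1 := by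
  simp [IsReduced]

lemma isReduced_append {S : I → Set M} {u v : List (I × M)} :
    IsReduced S (u ++ v) ↔ IsReduced S u ∧ IsReduced S v ∧
      ∀ p ∈ u.getLast?, ∀ q ∈ v.head?, p.1 ≠ q.1 := by
  have hmem : (∀ p ∈ u ++ v, p.2 ∈ S p.1) ↔ (∀ p ∈ u, p.2 ∈ S p.1) ∧ ∀ p ∈ v, p.2 ∈ S p.1 := by
    simp only [List.mem_append, or_imp, forall_and]
  simp only [IsReduced, List.isChain_map, List.isChain_append, hmem]
  tauto

lemma isReduced_cons_cons {S : I → Set M} {p q : I × M} {l : List (I × M)} :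
    IsReduced S (p :: q :: l) ↔ p.2 ∈ S p.1 ∧ p.1 ≠ q.1 ∧ IsReduced S (q :: l) := by
  rw [← List.singleton_append, isReduced_append, isReduced_singleton]
  simp [and_comm]

namespace IsReduced

variable {S : I → Set M} {l m : List (I × M)}

lemma of_infix (hl : IsReduced S l) (hm : m <:+: l) : IsReduced S m :=
  ⟨hl.1.infix (hm.map _), fun p hp => hl.2 p (hm.subset hp)⟩

lemma tail {p : I × M} (hl : IsReduced S (p :: l)) : IsReduced S l :=
  hl.of_infix (List.suffix_cons p l).isInfix

lemma replace_letter {x y : List (I × M)} {i : I} {a b : M}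
    (hl : IsReduced S (x ++ (i, a) :: y)) (hb : b ∈ S i) : IsReduced S (x ++ (i, b) :: y) := by
  refine ⟨by simpa using hl.1, fun p hp => ?_⟩
  obtain hp | rfl | hp : p ∈ x ∨ p = (i, b) ∨ p ∈ y := by simpa using hp
  · exact hl.2 p (by simp [hp])
  · exact hb
  · exact hl.2 p (by simp [hp])

end IsReduced

lemma exists_eq_ofFn {n : ℕ} {l : List (I × M)} (hl : l.length = n) :
    ∃ (idx : Fin n → I) (b : Fin n → M), l = List.ofFn fun k => (idx k, b k) := by
  subst hl
  exact ⟨fun k => l[k].1, fun k => l[k].2, List.ofFn_getElem.symm⟩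

lemma isReduced_ofFn {S : I → Set M} {n : ℕ} {idx : Fin (n + 1) → I} {b : Fin (n + 1) → M} :
    IsReduced S (List.ofFn fun k => (idx k, b k)) ↔
      (∀ k : Fin n, idx k.castSucc ≠ idx k.succ) ∧ ∀ k, b k ∈ S (idx k) := by
  rw [IsReduced, List.map_ofFn, List.isChain_ofFn, List.forall_mem_ofFn_iff]
  refine and_congr_left' ⟨fun h k => h k (by lia), fun h k hk => h ⟨k, by lia⟩⟩

variable [Monoid M]

/-- The product of the letters of a word. -/
def wordProd (l : List (I × M)) : M := (l.map Prod.snd).prod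

@[simp] lemma wordProd_nil : wordProd ([] : List (I × M)) = 1 := rfl

@[simp] lemma wordProd_cons (p : I × M) (l : List (I × M)) :
    wordProd (p :: l) = p.2 * wordProd l := by
  simp [wordProd]

@[simp] lemma wordProd_append (u v : List (I × M)) :
    wordProd (u ++ v) = wordProd u * wordProd v := by
  simp [wordProd]

namespace IsReduced

variable {S : I → Set M} {l : List (I × M)} {i : I} {a : M}

lemma wordProd_mem {σ : Type*} [SetLike σ M] [SubmonoidClass σ M] {s : σ} (hl : IsReduced S l)
    (hS : ∀ i, ∀ a ∈ S i, a ∈ s) : wordProd l ∈ s :=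
  list_prod_mem fun _ ha => by
    obtain ⟨p, hp, rfl⟩ := List.mem_map.1 ha
    exact hS p.1 p.2 (hl.2 p hp)

lemma exists_cons_eq_mul (hl : IsReduced S l) (ha : a ∈ S i)
    (hmul : ∀ b ∈ S i, a * b ∈ S i) :
    ∃ b z, IsReduced S ((i, b) :: z) ∧ wordProd ((i, b) :: z) = a * wordProd l := by
  rcases l with _ | ⟨⟨j, b⟩, z⟩
  · exact ⟨a, [], isReduced_singleton.2 ha, by simp⟩
  · obtain rfl | hij := eq_or_ne i j
    · exact ⟨a * b, z, hl.replace_letter (x := []) (hmul b (hl.2 (i, b) (by simp))),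
        by simp [mul_assoc]⟩
    · exact ⟨a, (j, b) :: z, isReduced_cons_cons.2 ⟨ha, hij, hl⟩, by simp⟩

lemma exists_append_eq_mul (hl : IsReduced S l) (ha : a ∈ S i)
    (hmul : ∀ b ∈ S i, b * a ∈ S i) :
    ∃ b z, IsReduced S (z ++ [(i, b)]) ∧ wordProd (z ++ [(i, b)]) = wordProd l * a := by
  rcases List.eq_nil_or_concat' l with rfl | ⟨z, ⟨j, b⟩, rfl⟩
  · exact ⟨a, [], isReduced_singleton.2 ha, by simp⟩
  · obtain rfl | hij := eq_or_ne i j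
    · exact ⟨b * a, z, hl.replace_letter (hmul b (hl.2 (i, b) (by simp))),
        by simp [mul_assoc]⟩
    · refine ⟨a, z ++ [(j, b)], isReduced_append.2 ⟨hl, isReduced_singleton.2 ha, ?_⟩,
        by simp [mul_assoc]⟩
      simpa using hij.symm

end IsReduced

lemma wordProd_ofFn {n : ℕ} (idx : Fin n → I) (b : Fin n → M) :
    wordProd (List.ofFn fun k => (idx k, b k)) = (List.ofFn b).prod := by
  simp [wordProd, List.map_ofFn, Function.comp_def]

end Words

section Centered

variable {I : Type*} (φ : B →ₗ[ℂ] ℂ) (U : I → Subalgebra ℂ B)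

/-- The centered elements of each algebra of a family; they are the letters of the words that
define freeness. -/
def centered (i : I) : Set B := {a | a ∈ U i ∧ φ a = 0}

/-- The span of the reduced words in centered letters. -/
def reducedSpan : Submodule ℂ B :=
  Submodule.span ℂ (wordProd '' {l | IsReduced (centered φ U) l})

variable {φ U}

lemma wordProd_mem_reducedSpan {l : List (I × B)} (hl : IsReduced (centered φ U) l) :
    wordProd l ∈ reducedSpan φ U :=
  Submodule.subset_span ⟨l, hl, rfl⟩

lemma sub_smul_one_mem_centered (hφ1 : φ 1 = 1) {i : I} {a : B} (ha : a ∈ U i) :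
    a - φ a • 1 ∈ centered φ U i :=
  ⟨sub_mem ha ((U i).smul_mem (one_mem _) _), by simp [hφ1]⟩

lemma centered_mul_wordProd_mem_reducedSpan (hφ1 : φ 1 = 1) {i : I} {a : B}
    (ha : a ∈ centered φ U i) {l : List (I × B)} (hl : IsReduced (centered φ U) l) :
    a * wordProd l ∈ reducedSpan φ U := by
  rcases l with _ | ⟨⟨j, b⟩, l⟩
  · simpa using wordProd_mem_reducedSpan (isReduced_singleton (p := (i, a)).2 ha)
  obtain rfl | hij := eq_or_ne i j
  · have hab : a * b ∈ U i := mul_mem ha.1 (hl.2 (i, b) (by simp)).1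
    have hc := hl.replace_letter (x := []) (sub_smul_one_mem_centered hφ1 hab)
    have hsplit : a * wordProd ((i, b) :: l) =
        wordProd ([] ++ (i, a * b - φ (a * b) • 1) :: l) + φ (a * b) • wordProd l := by
      simp [sub_mul, mul_assoc]
    rw [hsplit]
    exact add_mem (wordProd_mem_reducedSpan hc)
      (Submodule.smul_mem _ _ (wordProd_mem_reducedSpan hl.tail))
  · simpa using wordProd_mem_reducedSpan (isReduced_cons_cons (p := (i, a)).2 ⟨ha, hij, hl⟩)

lemma mul_mem_reducedSpan (hφ1 : φ 1 = 1) {i : I} {a x : B} (ha : a ∈ U i)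
    (hx : x ∈ reducedSpan φ U) : a * x ∈ reducedSpan φ U := by
  have hcentered : a * x - φ a • x ∈ reducedSpan φ U := by
    have hle : reducedSpan φ U ≤
        (reducedSpan φ U).comap (LinearMap.mulLeft ℂ (a - φ a • 1)) :=
      Submodule.span_le.2 <| Set.image_subset_iff.2 fun _ hl =>
        centered_mul_wordProd_mem_reducedSpan hφ1 (sub_smul_one_mem_centered hφ1 ha) hl
    simpa [sub_mul] using hle hx
  simpa using add_mem hcentered (Submodule.smul_mem _ (φ a) hx)

lemma adjoin_le_reducedSpan (hφ1 : φ 1 = 1) :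
    Subalgebra.toSubmodule (Algebra.adjoin ℂ (⋃ i, (U i : Set B))) ≤ reducedSpan φ U := by
  rw [Algebra.adjoin_eq_span, Submodule.span_le]
  intro x hx
  induction hx using Submonoid.closure_induction_left with
  | one => exact wordProd_mem_reducedSpan (isReduced_nil _)
  | mul_left a ha x _ hx =>
    obtain ⟨i, hi⟩ := Set.mem_iUnion.1 ha
    exact mul_mem_reducedSpan hφ1 hi hx

end Centered

section Freeness

variable {I : Type*} {φ : B →ₗ[ℂ] ℂ} {U : I → Subalgebra ℂ B}

lemma isFreeFamily_iff :
    IsFreeFamily ⇑φ (fun i => (U i : Set B)) ↔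
      ∀ l, IsReduced (centered φ U) l → l ≠ [] → φ (wordProd l) = 0 := by
  constructor
  · intro h l hl hne
    obtain ⟨n, hn⟩ := Nat.exists_eq_succ_of_ne_zero (List.length_eq_zero_iff.not.2 hne)
    obtain ⟨idx, b, rfl⟩ := exists_eq_ofFn hn
    rw [isReduced_ofFn] at hl
    rw [wordProd_ofFn]
    exact h n idx b hl.1 (fun k => (hl.2 k).1) fun k => (hl.2 k).2
  · intro h n idx b hidx hb hφb
    rw [← wordProd_ofFn idx b]
    exact h _ (isReduced_ofFn.2 ⟨hidx, fun k => ⟨hb k, hφb k⟩⟩) (by simp)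

lemma map_append_mul_cons (hφ1 : φ 1 = 1) (hfree : IsFreeFamily ⇑φ (fun i => (U i : Set B)))
    {i : I} {a b : B} {u v : List (I × B)} (hu : IsReduced (centered φ U) (u ++ [(i, a)]))
    (hv : IsReduced (centered φ U) ((i, b) :: v)) :
    φ (wordProd (u ++ [(i, a)]) * wordProd ((i, b) :: v)) =
      φ (wordProd u * wordProd v) * φ (a * b) := by
  have hab : a * b ∈ U i :=
    mul_mem (hu.2 (i, a) (by simp)).1 (hv.2 (i, b) (by simp)).1
  set c : B := a * b - φ (a * b) • 1 with hc
  have hcmem : c ∈ centered φ U i := sub_smul_one_mem_centered hφ1 hab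
  have huc : IsReduced (centered φ U) (u ++ [(i, c)]) := hu.replace_letter hcmem
  have huv : IsReduced (centered φ U) (u ++ (i, c) :: v) := by
    have hcv := hv.replace_letter (x := []) hcmem
    rw [isReduced_append] at huc ⊢
    exact ⟨huc.1, hcv, by simpa using huc.2.2⟩
  have hsplit : wordProd (u ++ [(i, a)]) * wordProd ((i, b) :: v) =
      wordProd (u ++ (i, c) :: v) + φ (a * b) • (wordProd u * wordProd v) := by
    simp [hc, sub_mul, mul_sub, mul_assoc]
  rw [hsplit, map_add, isFreeFamily_iff.1 hfree _ huv (by simp), zero_add, map_smul, smul_eq_mul,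
    mul_comm]

lemma map_mul_eq_zero (hφ1 : φ 1 = 1) (hfree : IsFreeFamily ⇑φ (fun i => (U i : Set B)))
    {u v : List (I × B)} (hu : IsReduced (centered φ U) u) (hv : IsReduced (centered φ U) v)
    (huv : u.map Prod.fst ≠ (v.map Prod.fst).reverse) :
    φ (wordProd u * wordProd v) = 0 := by
  induction u using List.reverseRecOn generalizing v with
  | nil =>
    rw [wordProd_nil, one_mul]
    exact isFreeFamily_iff.1 hfree v hv (by rintro rfl; simp at huv)
  | append_singleton u p ih =>
    rcases v with _ | ⟨q, v⟩
    · rw [wordProd_nil, mul_one]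
      exact isFreeFamily_iff.1 hfree _ hu (by simp)
    obtain ⟨⟨i, a⟩, ⟨j, b⟩⟩ := p, q
    obtain rfl | hij := eq_or_ne i j
    · rw [map_append_mul_cons hφ1 hfree hu hv, ih (isReduced_append.1 hu).1 hv.tail, zero_mul]
      simpa using huv
    · rw [← wordProd_append]
      exact isFreeFamily_iff.1 hfree _ (isReduced_append.2 ⟨hu, hv, by simpa using hij⟩) (by simp)

lemma map_mul_eq_prod (hφ1 : φ 1 = 1) (hfree : IsFreeFamily ⇑φ (fun i => (U i : Set B)))
    {u v : List (I × B)} (hu : IsReduced (centered φ U) u) (hv : IsReduced (centered φ U) v)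
    (huv : u.map Prod.fst = (v.map Prod.fst).reverse) :
    φ (wordProd u * wordProd v) =
      (List.zipWith (fun p q => φ (p.2 * q.2)) u v.reverse).prod := by
  induction u using List.reverseRecOn generalizing v with
  | nil =>
    obtain rfl : v = [] := by simpa using huv
    simp [hφ1]
  | append_singleton u p ih =>
    rcases v with _ | ⟨q, v⟩
    · simp at huv
    obtain ⟨⟨i, a⟩, ⟨j, b⟩⟩ := p, q
    obtain ⟨hidx, rfl⟩ : u.map Prod.fst = (v.map Prod.fst).reverse ∧ i = j := by simpa using huv
    have hlen : u.length = v.reverse.length := by simpa using congrArg List.length hidx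
    rw [map_append_mul_cons hφ1 hfree hu hv, ih (isReduced_append.1 hu).1 hv.tail hidx,
      List.reverse_cons, List.zipWith_append hlen, List.prod_append]
    simp

end Freeness

section Leibniz

variable {I : Type*}

/-- The Leibniz rule for `φ'` along a word: apply `φ'` to one letter, `φ` to the product of the
others, and sum over the letters. -/
def leibnizSum (φ φ' : B →ₗ[ℂ] ℂ) (l : List (I × B)) : ℂ :=
  ∑ k : Fin l.length, φ (wordProd (l.take k) * wordProd (l.drop (k + 1))) * φ' l[k].2

variable {φ φ' : B →ₗ[ℂ] ℂ} {U : I → Subalgebra ℂ B}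

lemma leibnizSum_eq_zero {l : List (I × B)}
    (h : ∀ u c v, l = u ++ c :: v → φ (wordProd u * wordProd v) * φ' c.2 = 0) :
    leibnizSum φ φ' l = 0 :=
  Finset.sum_eq_zero fun k _ => h _ _ _ (by simp)

lemma leibnizSum_append_cons {u v : List (I × B)} {c : I × B}
    (h : ∀ u' c' v', u ++ c :: v = u' ++ c' :: v' → u'.length ≠ u.length →
      φ (wordProd u' * wordProd v') * φ' c'.2 = 0) :
    leibnizSum φ φ' (u ++ c :: v) = φ (wordProd u * wordProd v) * φ' c.2 := by
  rw [leibnizSum, Finset.sum_eq_single ⟨u.length, by simp⟩]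
  · simp [← List.drop_drop]
  · intro k _ hk
    refine h _ _ _ (by simp) ?_
    have hklt := k.isLt
    rw [List.length_take_of_le hklt.le]
    exact fun hku => hk (Fin.ext hku)
  · simp

lemma leibnizSum_eq_zero_of_not_palindrome (hφ1 : φ 1 = 1)
    (hfree : IsFreeFamily ⇑φ (fun i => (U i : Set B))) {l : List (I × B)}
    (hl : IsReduced (centered φ U) l)
    (hpal : ¬(Odd l.length ∧ (l.map Prod.fst).reverse = l.map Prod.fst)) :
    leibnizSum φ φ' l = 0 := by
  refine leibnizSum_eq_zero fun u c v huv => ?_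
  subst huv
  obtain ⟨hleft, hright, -⟩ := isReduced_append.1 hl
  rw [map_mul_eq_zero hφ1 hfree hleft hright.tail, zero_mul]
  intro hidx
  have hlen : u.length = v.length := by simpa using congrArg List.length hidx
  refine hpal ⟨⟨v.length, ?_⟩, by simp [hidx]⟩
  rw [List.length_append, List.length_cons, hlen]
  ring

lemma leibnizSum_of_palindrome (hφ1 : φ 1 = 1)
    (hfree : IsFreeFamily ⇑φ (fun i => (U i : Set B))) {u v : List (I × B)} {c : I × B}
    (hl : IsReduced (centered φ U) (u ++ c :: v))
    (hidx : u.map Prod.fst = (v.map Prod.fst).reverse) :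
    leibnizSum φ φ' (u ++ c :: v) =
      (List.zipWith (fun p q => φ (p.2 * q.2)) u v.reverse).prod * φ' c.2 := by
  have hlen : u.length = v.length := by simpa using congrArg List.length hidx
  rw [leibnizSum_append_cons fun u' c' v' huv hne => ?_, map_mul_eq_prod hφ1 hfree
    (isReduced_append.1 hl).1 (isReduced_append.1 hl).2.1.tail hidx]
  rw [huv] at hl
  obtain ⟨hleft, hright, -⟩ := isReduced_append.1 hl
  rw [map_mul_eq_zero hφ1 hfree hleft hright.tail, zero_mul]
  intro hidx'
  have hlen' : u'.length = v'.length := by simpa using congrArg List.length hidx'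
  have htotal := congrArg List.length huv
  simp only [List.length_append, List.length_cons] at htotal
  lia

lemma reverse_ofFn_eq_iff {n : ℕ} {idx : Fin n → I} :
    (List.ofFn idx).reverse = List.ofFn idx ↔ ∀ k, idx k = idx k.rev := by
  have hrev : (List.ofFn idx).reverse = List.ofFn fun k => idx k.rev :=
    List.ext_getElem (by simp) fun k _ hk => by
      simp only [List.getElem_reverse, List.getElem_ofFn, List.length_ofFn]
      exact congrArg idx (Fin.ext (by simp; lia))
  rw [hrev, List.ofFn_inj, funext_iff]
  exact forall_congr' fun k => eq_comm

lemma leibnizSum_ofFn_of_not_palindrome (hφ1 : φ 1 = 1)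
    (hfree : IsFreeFamily ⇑φ (fun i => (U i : Set B))) {n : ℕ}
    {idx : Fin (n + 1) → I} {b : Fin (n + 1) → B}
    (hl : IsReduced (centered φ U) (List.ofFn fun k => (idx k, b k)))
    (hpal : ¬(Even n ∧ ∀ k, idx k = idx k.rev)) :
    leibnizSum φ φ' (List.ofFn fun k => (idx k, b k)) = 0 := by
  refine leibnizSum_eq_zero_of_not_palindrome hφ1 hfree hl fun h => hpal ?_
  rw [List.map_ofFn, List.length_ofFn, Nat.odd_add_one, Nat.not_odd_iff_even] at h
  exact ⟨h.1, reverse_ofFn_eq_iff.1 h.2⟩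

lemma leibnizSum_ofFn_of_palindrome (hφ1 : φ 1 = 1)
    (hfree : IsFreeFamily ⇑φ (fun i => (U i : Set B))) {m : ℕ}
    {idx : Fin (2 * m + 1) → I} {b : Fin (2 * m + 1) → B}
    (hl : IsReduced (centered φ U) (List.ofFn fun k => (idx k, b k)))
    (hpal : ∀ k, idx k = idx k.rev) :
    leibnizSum φ φ' (List.ofFn fun k => (idx k, b k)) =
      (∏ j : Fin m, φ (b (Fin.castLE (by lia) j) * b (Fin.castLE (by lia) j).rev)) *
        φ' (b ⟨m, by lia⟩) := by
  set l := List.ofFn fun k => (idx k, b k) with hl_def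
  have hm : m < l.length := by simp [hl_def]; lia
  have hsplit : l = l.take m ++ l[m] :: l.drop (m + 1) := by simp
  have hidx : (l.take m).map Prod.fst = ((l.drop (m + 1)).map Prod.fst).reverse := by
    refine List.ext_getElem (by simp [hl_def]; lia) fun k hk _ => ?_
    have hkm : k < m := by simp at hk; lia
    simp only [hl_def, List.getElem_map, List.getElem_take, List.getElem_ofFn,
      List.getElem_reverse, List.getElem_drop, List.length_map, List.length_drop, List.length_ofFn]
    rw [hpal]
    exact congrArg idx (Fin.ext (by simp; lia))
  have hpair : List.zipWith (fun p q => φ (p.2 * q.2)) (l.take m) (l.drop (m + 1)).reverse =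
      List.ofFn fun j : Fin m =>
        φ (b (Fin.castLE (by lia) j) * b (Fin.castLE (by lia) j).rev) := by
    refine List.ext_getElem (by simp [hl_def]; lia) fun k hk _ => ?_
    have hkm : k < m := by simp at hk; lia
    simp only [hl_def, List.getElem_zipWith, List.getElem_take, List.getElem_ofFn,
      List.getElem_reverse, List.getElem_drop, List.length_drop, List.length_ofFn]
    have hrev : (⟨m + 1 + (2 * m + 1 - (m + 1) - 1 - k), by lia⟩ : Fin (2 * m + 1)) =
        (Fin.castLE (by lia) (⟨k, hkm⟩ : Fin m)).rev := Fin.ext (by simp; lia)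
    rw [hrev, Fin.castLE_mk]
  rw [hsplit] at hl ⊢
  rw [leibnizSum_of_palindrome hφ1 hfree hl hidx, hpair, List.prod_ofFn]
  simp only [hl_def, List.getElem_ofFn]

theorem isInfFree_iff_leibniz (hφ1 : φ 1 = 1) :
    IsInfFree ⇑φ ⇑φ' (fun i => (U i : Set B)) ↔
      IsFreeFamily ⇑φ (fun i => (U i : Set B)) ∧
        ∀ l, IsReduced (centered φ U) l → l ≠ [] → φ' (wordProd l) = leibnizSum φ φ' l := by
  refine and_congr_right fun hfree => ⟨fun ⟨hzero, hpal⟩ l hl hne => ?_, fun h => ⟨?_, ?_⟩⟩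
  · obtain ⟨n, hn⟩ := Nat.exists_eq_succ_of_ne_zero (List.length_eq_zero_iff.not.2 hne)
    obtain ⟨idx, b, rfl⟩ := exists_eq_ofFn hn
    obtain ⟨hidx, hb⟩ := isReduced_ofFn.1 hl
    rw [wordProd_ofFn]
    by_cases hn : Even n ∧ ∀ k, idx k = idx k.rev
    · obtain ⟨heven, hrev⟩ := hn
      obtain ⟨m, rfl⟩ := even_iff_exists_two_mul.1 heven
      rw [hpal m idx b hidx (fun k => (hb k).1) (fun k => (hb k).2) hrev,
        leibnizSum_ofFn_of_palindrome hφ1 hfree hl hrev]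
    · rw [hzero n idx b hidx (fun k => (hb k).1) (fun k => (hb k).2) hn,
        leibnizSum_ofFn_of_not_palindrome hφ1 hfree hl hn]
  · intro n idx b hidx hb hφb hn
    have hl := isReduced_ofFn (S := centered φ U).2 ⟨hidx, fun k => ⟨hb k, hφb k⟩⟩
    rw [← wordProd_ofFn idx b, h _ hl (by simp),
      leibnizSum_ofFn_of_not_palindrome hφ1 hfree hl hn]
  · intro m idx b hidx hb hφb hrev
    have hl := isReduced_ofFn (S := centered φ U).2 ⟨hidx, fun k => ⟨hb k, hφb k⟩⟩
    rw [← wordProd_ofFn idx b, h _ hl (by simp), leibnizSum_ofFn_of_palindrome hφ1 hfree hl hrev]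

end Leibniz

section CyclicAntimonotone

lemma prod_ofFn_mul {M : Type*} [Monoid M] {m : ℕ} (f a : Fin (m + 1) → M) :
    (List.ofFn fun k => f k * a k).prod =
      f 0 * (List.ofFn fun k : Fin m => a k.castSucc * f k.succ).prod * a (Fin.last m) := by
  induction m with
  | zero => simp
  | succ m ih =>
    rw [List.ofFn_succ, List.prod_cons, ih, List.ofFn_succ (n := m), List.prod_cons]
    simp [mul_assoc]

lemma prod_Ioo_zero_last {M : Type*} [CommMonoid M] {m : ℕ} (g : Fin (m + 2) → M) :
    ∏ k ∈ Finset.Ioo 0 (Fin.last (m + 1)), g k = ∏ k : Fin m, g k.castSucc.succ := by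
  have hIoo : Finset.Ioo 0 (Fin.last (m + 1)) =
      Finset.univ.filter fun k => 0 < k ∧ k < Fin.last (m + 1) := by ext; simp
  rw [hIoo, Finset.prod_filter, Fin.prod_univ_succ, Fin.prod_univ_castSucc]
  simp [← Fin.succ_last, Fin.castSucc_lt_last]

section Closure

variable {M σ τ : Type*} [Monoid M] [SetLike σ M] [SubmonoidClass σ M] [SetLike τ M]
  {𝒜 : σ} {ℱ : τ}

lemma exists_mul_eq_of_mem_closure {x f : M}
    (hx : x ∈ Submonoid.closure ((𝒜 : Set M) ∪ ℱ)) (hf : f ∈ ℱ) :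
    ∃ a ∈ 𝒜, ∃ g ∈ ℱ, ∃ L : List (M × M), (∀ p ∈ L, p.1 ∈ 𝒜 ∧ p.2 ∈ ℱ) ∧
      x * f = a * g * (L.map fun p => p.1 * p.2).prod := by
  induction hx using Submonoid.closure_induction_left with
  | one => exact ⟨1, one_mem _, f, hf, [], by simp, by simp⟩
  | mul_left z hz x _ ih =>
    obtain ⟨a, ha, g, hg, L, hL, hxf⟩ := ih
    rcases hz with hz | hz
    · exact ⟨z * a, mul_mem hz ha, g, hg, L, hL, by rw [mul_assoc, hxf]; simp only [mul_assoc]⟩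
    · refine ⟨1, one_mem _, z, hz, (a, g) :: L, List.forall_mem_cons.2 ⟨⟨ha, hg⟩, hL⟩, ?_⟩
      rw [mul_assoc, hxf]
      simp [mul_assoc]

lemma exists_eq_mul_of_mem_closure {y : M} (hy : y ∈ Submonoid.closure ((𝒜 : Set M) ∪ ℱ)) :
    ∃ L : List (M × M), (∀ p ∈ L, p.1 ∈ 𝒜 ∧ p.2 ∈ ℱ) ∧ ∃ a ∈ 𝒜,
      y = (L.map fun p => p.1 * p.2).prod * a := by
  induction hy using Submonoid.closure_induction_right with
  | one => exact ⟨[], by simp, 1, one_mem _, by simp⟩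
  | mul_right y _ z hz ih =>
    obtain ⟨L, hL, a, ha, rfl⟩ := ih
    rcases hz with hz | hz
    · exact ⟨L, hL, a * z, mul_mem ha hz, mul_assoc _ _ _⟩
    · refine ⟨L ++ [(a, z)], ?_, 1, one_mem _, by simp [mul_assoc]⟩
      exact List.forall_mem_append.2 ⟨hL, by simpa using ⟨ha, hz⟩⟩

end Closure

variable {R : Type*} [Ring R]

/-- An alternating word is encoded here by its first letters `a₀`, `f₁`, its last letter `aₙ` and
the pairs `(a₁, f₂), …, (aₙ₋₁, fₙ)` in between. -/
lemma cyclicAntimonotone_iff_list {φ Φ : R → ℂ} {A₁ F₁ : Set R} :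
    CyclicAntimonotone φ Φ A₁ F₁ ↔
      ∀ a ∈ A₁, ∀ f ∈ F₁, ∀ L : List (R × R), (∀ p ∈ L, p.1 ∈ A₁ ∧ p.2 ∈ F₁) → ∀ a' ∈ A₁,
        Φ (a * f * (L.map fun p => p.1 * p.2).prod * a') =
          φ (a * a') * (L.map fun p => φ p.1).prod * Φ (f * (L.map Prod.snd).prod) := by
  constructor
  · intro h a ha f hf L hL a' ha'
    obtain ⟨m, hm⟩ : ∃ m, L.length = m := ⟨_, rfl⟩
    obtain ⟨b, g, rfl⟩ := exists_eq_ofFn hm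
    rw [List.forall_mem_ofFn_iff] at hL
    have hformula := h (m + 1) m.succ_pos (Fin.cons a (Fin.snoc b a')) (Fin.cons f g)
      (Fin.cases ha (Fin.lastCases (by simpa using ha') fun k => by simpa using (hL k).1))
      (Fin.cases hf fun k => by simpa using (hL k).2)
    rw [altWord, prod_ofFn_mul, prod_Ioo_zero_last, ← Fin.succ_last] at hformula
    simpa [List.map_ofFn, Function.comp_def, List.prod_ofFn, mul_assoc] using hformula
  · intro h n hn a f ha hf
    obtain ⟨m, rfl⟩ := Nat.exists_eq_succ_of_ne_zero hn.ne'
    have hformula := h (a 0) (ha 0) (f 0) (hf 0)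
      (List.ofFn fun k : Fin m => (a k.castSucc.succ, f k.succ))
      (List.forall_mem_ofFn_iff.2 fun k => ⟨ha _, hf _⟩) (a (Fin.last (m + 1))) (ha _)
    rw [altWord, prod_ofFn_mul, prod_Ioo_zero_last]
    simpa [List.map_ofFn, Function.comp_def, List.prod_ofFn, mul_assoc] using hformula

theorem cyclicAntimonotone_iff {σ τ : Type*} [SetLike σ R] [SubmonoidClass σ R] [SetLike τ R]
    [MulMemClass τ R] {𝒜 : σ} {ℱ : τ} {φ Φ : R → ℂ} (hφ1 : φ 1 = 1) :
    CyclicAntimonotone φ Φ 𝒜 ℱ ↔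
      (∀ a ∈ 𝒜, ∀ f ∈ ℱ, ∀ a' ∈ 𝒜, Φ (a * f * a') = φ (a * a') * Φ f) ∧
      ∀ x ∈ Submonoid.closure ((𝒜 : Set R) ∪ ℱ), ∀ f ∈ ℱ, ∀ a ∈ 𝒜, ∀ f' ∈ ℱ,
        ∀ y ∈ Submonoid.closure ((𝒜 : Set R) ∪ ℱ),
          Φ (x * f * a * f' * y) = φ a * Φ (x * f * f' * y) := by
  rw [cyclicAntimonotone_iff_list]
  refine ⟨fun h => ⟨fun a ha f hf a' ha' => ?_, fun x hx f hf a ha f' hf' y hy => ?_⟩,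
    fun ⟨hone, htwo⟩ a ha f hf L hL a' ha' => ?_⟩
  · simpa using h a ha f hf [] (by simp) a' ha'
  · obtain ⟨b, hb, g, hg, L, hL, hxf⟩ := exists_mul_eq_of_mem_closure hx hf
    obtain ⟨L', hL', b', hb', rfl⟩ := exists_eq_mul_of_mem_closure hy
    have hletter : ∀ c ∈ 𝒜, ∀ p ∈ L ++ (c, f') :: L', p.1 ∈ 𝒜 ∧ p.2 ∈ ℱ := fun c hc =>
      List.forall_mem_append.2 ⟨hL, List.forall_mem_cons.2 ⟨⟨hc, hf'⟩, hL'⟩⟩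
    have ha' := h b hb g hg _ (hletter a ha) b' hb'
    have h1 := h b hb g hg _ (hletter 1 (one_mem _)) b' hb'
    simp only [List.map_append, List.map_cons, List.prod_append, List.prod_cons, hφ1, one_mul,
      ← mul_assoc, ← hxf] at ha' h1 ⊢
    rw [ha', h1]
    ring
  · induction L generalizing f with
    | nil => simpa using hone a ha f hf a' ha'
    | cons p L ih =>
      obtain ⟨⟨hb, hg⟩, hL⟩ := List.forall_mem_cons.1 hL
      have hrest : (L.map fun p => p.1 * p.2).prod * a' ∈ Submonoid.closure ((𝒜 : Set R) ∪ ℱ) := by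
        refine mul_mem (list_prod_mem fun z hz => ?_) (Submonoid.subset_closure (.inl ha'))
        obtain ⟨q, hq, rfl⟩ := List.mem_map.1 hz
        exact mul_mem (Submonoid.subset_closure (.inl (hL q hq).1))
          (Submonoid.subset_closure (.inr (hL q hq).2))
      have hremove := htwo a (Submonoid.subset_closure (.inl ha)) f hf p.1 hb p.2 hg _ hrest
      have hmerge := ih (f * p.2) (mul_mem hf hg) hL
      simp only [List.map_cons, List.prod_cons, ← mul_assoc] at hremove hmerge ⊢
      rw [hremove, hmerge]
      ring

end CyclicAntimonotone

section MixedWords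

variable {ι κ M : Type*}

/-- A word over `ι`, read as a word over the disjoint union `ι ⊕ κ`. -/
def inlWord (u : List (ι × M)) : List ((ι ⊕ κ) × M) := u.map (Prod.map Sum.inl id)

/-- A word over `κ`, read as a word over the disjoint union `ι ⊕ κ`. -/
def inrWord (u : List (κ × M)) : List ((ι ⊕ κ) × M) := u.map (Prod.map Sum.inr id)

@[simp] lemma wordProd_inlWord [Monoid M] (u : List (ι × M)) :
    wordProd (inlWord u : List ((ι ⊕ κ) × M)) = wordProd u := by
  simp [wordProd, inlWord, Function.comp_def]

@[simp] lemma wordProd_inrWord [Monoid M] (u : List (κ × M)) :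
    wordProd (inrWord u : List ((ι ⊕ κ) × M)) = wordProd u := by
  simp [wordProd, inrWord, Function.comp_def]

@[simp] lemma isReduced_inlWord {S : ι → Set M} {T : κ → Set M} {u : List (ι × M)} :
    IsReduced (Sum.elim S T) (inlWord u) ↔ IsReduced S u := by
  rw [IsReduced, inlWord, List.forall_mem_map]
  simp [IsReduced, List.isChain_map]

@[simp] lemma isReduced_inrWord {S : ι → Set M} {T : κ → Set M} {u : List (κ × M)} :
    IsReduced (Sum.elim S T) (inrWord u) ↔ IsReduced T u := by
  rw [IsReduced, inrWord, List.forall_mem_map]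
  simp [IsReduced, List.isChain_map]

lemma isLeft_of_mem_inlWord {u : List (ι × M)} {p : (ι ⊕ κ) × M} (hp : p ∈ inlWord u) :
    p.1.isLeft := by
  obtain ⟨q, -, rfl⟩ := List.mem_map.1 hp
  rfl

lemma isRight_of_mem_inrWord {u : List (κ × M)} {p : (ι ⊕ κ) × M} (hp : p ∈ inrWord u) :
    p.1.isRight := by
  obtain ⟨q, -, rfl⟩ := List.mem_map.1 hp
  rfl

lemma fst_ne_fst_of_isLeft_of_isRight {p q : (ι ⊕ κ) × M} (hp : p.1.isLeft) (hq : q.1.isRight) :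
    p.1 ≠ q.1 := by
  intro hpq
  rw [hpq, ← Sum.not_isRight] at hp
  exact hp hq

lemma isReduced_inlWord_append_inrWord_append_inlWord {S : ι → Set M} {T : κ → Set M}
    {u v : List (ι × M)} {b : List (κ × M)} (hb : b ≠ []) :
    IsReduced (Sum.elim S T) (inlWord u ++ (inrWord b ++ inlWord v)) ↔
      IsReduced S u ∧ IsReduced T b ∧ IsReduced S v := by
  obtain ⟨f, b, rfl⟩ := List.exists_cons_of_ne_nil hb
  have huf : ∀ p ∈ (inlWord u : List ((ι ⊕ κ) × M)).getLast?,
      ∀ q ∈ (inrWord (f :: b) ++ inlWord v).head?, p.1 ≠ q.1 := fun p hp q hq =>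
    fst_ne_fst_of_isLeft_of_isRight (isLeft_of_mem_inlWord (List.mem_of_getLast? hp))
      (isRight_of_mem_inrWord (u := f :: b) (List.mem_of_mem_head? hq))
  have hbv : ∀ p ∈ (inrWord (f :: b) : List ((ι ⊕ κ) × M)).getLast?,
      ∀ q ∈ (inlWord v).head?, p.1 ≠ q.1 := fun p hp q hq =>
    (fst_ne_fst_of_isLeft_of_isRight (isLeft_of_mem_inlWord (List.mem_of_mem_head? hq))
      (isRight_of_mem_inrWord (List.mem_of_getLast? hp))).symm
  rw [isReduced_append, isReduced_append, isReduced_inlWord, isReduced_inrWord, isReduced_inlWord]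
  tauto

/-- The number of letters of a word over `ι ⊕ κ` with index in `κ`. -/
def inrCount (l : List ((ι ⊕ κ) × M)) : ℕ := l.countP (·.1.isRight)

lemma inrCount_append (l m : List ((ι ⊕ κ) × M)) :
    inrCount (l ++ m) = inrCount l + inrCount m :=
  List.countP_append

@[simp] lemma inrCount_inlWord (u : List (ι × M)) :
    inrCount (inlWord u : List ((ι ⊕ κ) × M)) = 0 := by
  simp [inrCount, inlWord, List.countP_map, Function.comp_def]

@[simp] lemma inrCount_inrWord (u : List (κ × M)) :
    inrCount (inrWord u : List ((ι ⊕ κ) × M)) = u.length := by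
  simp [inrCount, inrWord, List.countP_map, Function.comp_def]

lemma exists_separated_or_eq_block (l : List ((ι ⊕ κ) × M)) :
    (∃ x f u f' y, u ≠ [] ∧ l = x ++ (inrWord [f] ++ (inlWord u ++ (inrWord [f'] ++ y)))) ∨
      ∃ u b v, l = inlWord u ++ (inrWord b ++ inlWord v) := by
  induction l with
  | nil => exact .inr ⟨[], [], [], rfl⟩
  | cons p l ih =>
    obtain ⟨x, f, u, f', y, hu, rfl⟩ | ⟨u, b, v, rfl⟩ := ih
    · exact .inl ⟨p :: x, f, u, f', y, hu, rfl⟩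
    obtain ⟨i | j, a⟩ := p
    · exact .inr ⟨(i, a) :: u, b, v, rfl⟩
    rcases u with _ | ⟨q, u⟩
    · exact .inr ⟨[], (j, a) :: b, v, rfl⟩
    rcases b with _ | ⟨f', b⟩
    · exact .inr ⟨[], [(j, a)], q :: u ++ v, by simp [inlWord, inrWord]⟩
    · exact .inl ⟨[], (j, a), q :: u, f', inrWord b ++ inlWord v, by simp, by simp [inrWord]⟩

lemma exists_eq_inlWord_or_of_inrCount_lt_two {l : List ((ι ⊕ κ) × M)} (hl : inrCount l < 2) :
    (∃ u, l = inlWord u) ∨ ∃ u f v, l = inlWord u ++ (inrWord [f] ++ inlWord v) := by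
  obtain ⟨x, f, u, f', y, -, rfl⟩ | ⟨u, b, v, rfl⟩ := exists_separated_or_eq_block l
  · simp only [inrCount_append, inrCount_inrWord, List.length_singleton] at hl
    lia
  · rcases b with _ | ⟨f, _ | ⟨f', b⟩⟩
    · exact .inl ⟨u ++ v, by simp [inlWord, inrWord]⟩
    · exact .inr ⟨u, f, v, rfl⟩
    · simp [inrCount_append] at hl

end MixedWords

section ReducedWordRule

variable {ι κ : Type*}

/-- The values of `Φ` on reduced words in `A`-letters from `S` and `F`-letters from `T`: at most
one `F`-letter may occur, and `φ` is applied to what remains when it is omitted. -/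
structure ReducedWordRule {R : Type*} [Ring R] (φ Φ : R → ℂ) (S : ι → Set R) (T : κ → Set R) :
    Prop where
  map_eq_zero : ∀ l, IsReduced (Sum.elim S T) l → 2 ≤ inrCount l → Φ (wordProd l) = 0
  map_eq_mul : ∀ u v, IsReduced S u → IsReduced S v → ∀ j, ∀ f ∈ T j,
    Φ (wordProd u * f * wordProd v) = φ (wordProd u * wordProd v) * Φ f

lemma wordProd_mem_of_exists_mem {I R : Type*} [Ring R] (F : TwoSidedIdeal R) {l : List (I × R)}
    (hl : ∃ p ∈ l, p.2 ∈ F) : wordProd l ∈ F := by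
  obtain ⟨p, hp, hpF⟩ := hl
  obtain ⟨u, v, rfl⟩ := List.append_of_mem hp
  rw [wordProd_append, wordProd_cons]
  exact F.mul_mem_left _ _ (F.mul_mem_right _ _ hpF)

lemma wordProd_mem_of_one_le_inrCount {R : Type*} [Ring R] {S : ι → Set R} {T : κ → Set R}
    {F : TwoSidedIdeal R} (hT : ∀ j, ∀ f ∈ T j, f ∈ F) {l : List ((ι ⊕ κ) × R)}
    (hl : ∀ p ∈ l, p.2 ∈ Sum.elim S T p.1) (hcount : 1 ≤ inrCount l) : wordProd l ∈ F := by
  obtain ⟨⟨i | j, f⟩, hp, hright⟩ := List.countP_pos_iff.1 hcount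
  · simp at hright
  · exact wordProd_mem_of_exists_mem F ⟨_, hp, hT j f (hl _ hp)⟩

variable {S : ι → Set B} {T : κ → Set B} {F : TwoSidedIdeal B} {φ φ' : B →ₗ[ℂ] ℂ}

lemma map_snd_eq_zero_of_mem_inlWord (hφ'S : ∀ i, ∀ a ∈ S i, φ' a = 0) {u : List (ι × B)}
    (hu : IsReduced S u) {c : (ι ⊕ κ) × B} (hc : c ∈ inlWord u) : φ' c.2 = 0 := by
  obtain ⟨p, hp, rfl⟩ := List.mem_map.1 hc
  exact hφ'S p.1 p.2 (hu.2 p hp)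

lemma leibnizSum_inlWord (hφ'S : ∀ i, ∀ a ∈ S i, φ' a = 0) {u : List (ι × B)}
    (hu : IsReduced S u) : leibnizSum φ φ' (inlWord u : List ((ι ⊕ κ) × B)) = 0 :=
  leibnizSum_eq_zero fun _ c _ h => by
    rw [map_snd_eq_zero_of_mem_inlWord hφ'S hu (c := c) (by simp [h]), mul_zero]

lemma leibnizSum_inlWord_append_inrWord_append_inlWord (hφ'S : ∀ i, ∀ a ∈ S i, φ' a = 0)
    {u v : List (ι × B)} (hu : IsReduced S u) (hv : IsReduced S v) (f : κ × B) :
    leibnizSum φ φ' (inlWord u ++ (inrWord [f] ++ inlWord v) : List ((ι ⊕ κ) × B)) =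
      φ (wordProd u * wordProd v) * φ' f.2 := by
  change leibnizSum φ φ' (inlWord u ++ Prod.map Sum.inr id f :: inlWord v) = _
  rw [leibnizSum_append_cons fun x c y hxy hne => ?_, wordProd_inlWord, wordProd_inlWord]
  · rfl
  have hc : c ∈ (inlWord u : List ((ι ⊕ κ) × B)) ∨ c ∈ (inlWord v : List ((ι ⊕ κ) × B)) := by
    by_contra! hc
    exact hne (congrArg List.length ((List.append_cons_inj_of_notMem hc.1 hc.2).1 hxy).1).symm
  rw [hc.elim (map_snd_eq_zero_of_mem_inlWord hφ'S hu) (map_snd_eq_zero_of_mem_inlWord hφ'S hv),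
    mul_zero]

lemma leibnizSum_eq_zero_of_two_le_inrCount (hT : ∀ j, ∀ f ∈ T j, f ∈ F)
    (hφF : ∀ f ∈ F, φ f = 0) {l : List ((ι ⊕ κ) × B)} (hl : IsReduced (Sum.elim S T) l)
    (hcount : 2 ≤ inrCount l) : leibnizSum φ φ' l = 0 := by
  refine leibnizSum_eq_zero fun u c v huv => ?_
  subst huv
  have hrest : 1 ≤ inrCount (u ++ v) := by
    have hc : inrCount [c] ≤ 1 := List.countP_le_length
    rw [← List.singleton_append, inrCount_append, inrCount_append] at hcount
    rw [inrCount_append]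
    lia
  have hmem : ∀ p ∈ u ++ v, p.2 ∈ Sum.elim S T p.1 := fun p hp =>
    hl.2 p ((List.append_sublist_append_left u).2 (List.sublist_cons_self c v) |>.subset hp)
  rw [← wordProd_append, hφF _ (wordProd_mem_of_one_le_inrCount hT hmem hrest), zero_mul]

theorem leibniz_iff_reducedWordRule {Φ : B →ₗ[ℂ] ℂ} {A : Subalgebra ℂ B}
    (hSA : ∀ i, ∀ a ∈ S i, a ∈ A) (hT : ∀ j, ∀ f ∈ T j, f ∈ F) (hφF : ∀ f ∈ F, φ f = 0)
    (hφ'A : ∀ a ∈ A, φ' a = 0) (hφ'F : ∀ f ∈ F, φ' f = Φ f) :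
    (∀ l, IsReduced (Sum.elim S T) l → l ≠ [] → φ' (wordProd l) = leibnizSum φ φ' l) ↔
      ReducedWordRule ⇑φ ⇑Φ S T := by
  have hφ'S : ∀ i, ∀ a ∈ S i, φ' a = 0 := fun i a ha => hφ'A a (hSA i a ha)
  constructor
  · refine fun h => ⟨fun l hl hcount => ?_, fun u v hu hv j f hf => ?_⟩
    · have hF : wordProd l ∈ F := wordProd_mem_of_one_le_inrCount hT hl.2 (by lia)
      rw [← hφ'F _ hF, h l hl (by rintro rfl; simp [inrCount] at hcount),
        leibnizSum_eq_zero_of_two_le_inrCount hT hφF hl hcount]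
    · have hF : wordProd u * f * wordProd v ∈ F :=
        F.mul_mem_right _ _ (F.mul_mem_left _ _ (hT j f hf))
      have hl : IsReduced (Sum.elim S T) (inlWord u ++ (inrWord [(j, f)] ++ inlWord v)) :=
        (isReduced_inlWord_append_inrWord_append_inlWord (by simp)).2
          ⟨hu, isReduced_singleton.2 hf, hv⟩
      have hleibniz := h _ hl (by simp [inrWord])
      rw [leibnizSum_inlWord_append_inrWord_append_inlWord hφ'S hu hv] at hleibniz
      simpa [← mul_assoc, hφ'F _ hF, hφ'F f (hT j f hf)] using hleibniz
  · intro h l hl _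
    by_cases hcount : 2 ≤ inrCount l
    · rw [hφ'F _ (wordProd_mem_of_one_le_inrCount hT hl.2 (by lia)), h.map_eq_zero l hl hcount,
        leibnizSum_eq_zero_of_two_le_inrCount hT hφF hl hcount]
    obtain ⟨u, rfl⟩ | ⟨u, ⟨j, f⟩, v, rfl⟩ :=
      exists_eq_inlWord_or_of_inrCount_lt_two (not_le.1 hcount)
    · rw [isReduced_inlWord] at hl
      rw [wordProd_inlWord, hφ'A _ (hl.wordProd_mem hSA), leibnizSum_inlWord hφ'S hl]
    · obtain ⟨hu, hf, hv⟩ := (isReduced_inlWord_append_inrWord_append_inlWord (by simp)).1 hl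
      have hfT : f ∈ T j := isReduced_singleton.1 hf
      rw [hφ'F _ (wordProd_mem_of_one_le_inrCount hT hl.2 (by simp [inrCount_append])),
        leibnizSum_inlWord_append_inrWord_append_inlWord hφ'S hu hv, hφ'F f (hT j f hfT),
        ← h.map_eq_mul u v hu hv j f hfT]
      simp [mul_assoc]

end ReducedWordRule

section MixedFamily

variable {ι κ : Type*}

/-- The family over `ι ⊕ κ` formed by unital algebras and the unitizations of nonunital ones. -/
def mixedFamily (Ai : ι → Subalgebra ℂ B) (Fj : κ → NonUnitalSubalgebra ℂ B) :
    ι ⊕ κ → Subalgebra ℂ B :=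
  Sum.elim Ai fun j => Algebra.adjoin ℂ (Fj j : Set B)

lemma coe_adjoin_eq_unitize (F₁ : NonUnitalSubalgebra ℂ B) :
    (Algebra.adjoin ℂ (F₁ : Set B) : Set B) = unitize (F₁ : Set B) := by
  rw [← NonUnitalSubalgebra.unitization_range]
  ext x
  constructor
  · rintro ⟨y, rfl⟩
    exact ⟨y.fst, y.snd, y.snd.2, NonUnitalSubalgebra.unitization_apply F₁ y⟩
  · rintro ⟨c, f, hf, rfl⟩
    exact ⟨⟨(c, ⟨f, hf⟩)⟩, NonUnitalSubalgebra.unitization_apply F₁ ⟨(c, ⟨f, hf⟩)⟩⟩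

variable {φ : B →ₗ[ℂ] ℂ} {Ai : ι → Subalgebra ℂ B} {Fj : κ → NonUnitalSubalgebra ℂ B}

lemma coe_mixedFamily :
    (fun k => (mixedFamily Ai Fj k : Set B)) =
      Sum.elim (fun i => (Ai i : Set B)) (fun j => unitize (Fj j : Set B)) := by
  funext k
  cases k with
  | inl i => rfl
  | inr j => exact coe_adjoin_eq_unitize (Fj j)

lemma centered_mixedFamily (hφ1 : φ 1 = 1) (hφFj : ∀ j, ∀ f ∈ Fj j, φ f = 0) :
    centered φ (mixedFamily Ai Fj) = Sum.elim (centered φ Ai) (fun j => (Fj j : Set B)) := by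
  funext k
  cases k with
  | inl i => rfl
  | inr j =>
    ext x
    have hmem : x ∈ Algebra.adjoin ℂ (Fj j : Set B) ↔ x ∈ unitize (Fj j : Set B) := by
      rw [← coe_adjoin_eq_unitize, SetLike.mem_coe]
    change x ∈ Algebra.adjoin ℂ (Fj j : Set B) ∧ φ x = 0 ↔ x ∈ Fj j
    constructor
    · rintro ⟨hx, hφx⟩
      obtain ⟨c, f, hf, rfl⟩ := hmem.1 hx
      obtain rfl : c = 0 := by
        simpa [Algebra.algebraMap_eq_smul_one, hφ1, hφFj j f hf] using hφx
      simpa using hf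
    · exact fun hx => ⟨Algebra.subset_adjoin hx, hφFj j x hx⟩

lemma isFreeFamily_mixedFamily_iff {F : TwoSidedIdeal B} (hφ1 : φ 1 = 1)
    (hφF : ∀ f ∈ F, φ f = 0) (hFj : ∀ j, ∀ f ∈ Fj j, f ∈ F) :
    IsFreeFamily ⇑φ (fun k => (mixedFamily Ai Fj k : Set B)) ↔
      IsFreeFamily ⇑φ (fun i => (Ai i : Set B)) := by
  rw [isFreeFamily_iff, isFreeFamily_iff,
    centered_mixedFamily hφ1 fun j f hf => hφF f (hFj j f hf)]
  constructor
  · intro h u hu hne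
    rw [← wordProd_inlWord (κ := κ)]
    exact h _ (isReduced_inlWord.2 hu) (by simpa [inlWord] using hne)
  · intro h l hl hne
    by_cases hcount : 1 ≤ inrCount l
    · exact hφF _ (wordProd_mem_of_one_le_inrCount hFj hl.2 hcount)
    obtain ⟨u, rfl⟩ | ⟨u, f, v, rfl⟩ :=
      exists_eq_inlWord_or_of_inrCount_lt_two (l := l) (by lia)
    · rw [wordProd_inlWord]
      exact h u (isReduced_inlWord.1 hl) (by rintro rfl; simp [inlWord] at hne)
    · simp [inrCount_append] at hcount

end MixedFamily

section CyclicAntimonotoneAndTrivial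

variable {I K M : Type*}

lemma wordProd_mem_of_ne_nil [Monoid M] {τ : Type*} [SetLike τ M] [MulMemClass τ M] {s : τ}
    {l : List (I × M)} (hl : ∀ p ∈ l, p.2 ∈ s) (hne : l ≠ []) : wordProd l ∈ s := by
  induction l with
  | nil => exact absurd rfl hne
  | cons p l ih =>
    obtain ⟨hp, hl⟩ := List.forall_mem_cons.1 hl
    obtain rfl | hne := eq_or_ne l []
    · simpa using hp
    · exact mul_mem hp (ih hl hne)

section Absorption

variable [Monoid M] {S : I → Set M} {e : K → I}

lemma IsReduced.exists_cons_eq_mul_of_mem_closure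
    (hS : ∀ k, ∀ a ∈ S (e k), ∀ b ∈ S (e k), a * b ∈ S (e k)) {x : M}
    (hx : x ∈ Subsemigroup.closure (⋃ k, S (e k))) {l : List (I × M)} (hl : IsReduced S l) :
    ∃ k b z, IsReduced S ((e k, b) :: z) ∧ wordProd ((e k, b) :: z) = x * wordProd l := by
  induction hx using Subsemigroup.closure_induction generalizing l with
  | mem a ha =>
    obtain ⟨k, hk⟩ := Set.mem_iUnion.1 ha
    exact ⟨k, hl.exists_cons_eq_mul hk (hS k a hk)⟩
  | mul a b _ _ iha ihb =>
    obtain ⟨_, _, _, hm, hbl⟩ := ihb hl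
    obtain ⟨k, c, z, hz, habl⟩ := iha hm
    exact ⟨k, c, z, hz, by rw [habl, hbl, mul_assoc]⟩

lemma IsReduced.exists_append_eq_mul_of_mem_closure
    (hS : ∀ k, ∀ a ∈ S (e k), ∀ b ∈ S (e k), a * b ∈ S (e k)) {x : M}
    (hx : x ∈ Subsemigroup.closure (⋃ k, S (e k))) {l : List (I × M)} (hl : IsReduced S l) :
    ∃ k b z, IsReduced S (z ++ [(e k, b)]) ∧ wordProd (z ++ [(e k, b)]) = wordProd l * x := by
  induction hx using Subsemigroup.closure_induction generalizing l with
  | mem a ha =>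
    obtain ⟨k, hk⟩ := Set.mem_iUnion.1 ha
    exact ⟨k, hl.exists_append_eq_mul hk fun b hb => hS k b hb a hk⟩
  | mul a b _ _ iha ihb =>
    obtain ⟨_, _, _, hm, hla⟩ := iha hl
    obtain ⟨k, c, z, hz, hlab⟩ := ihb hm
    exact ⟨k, c, z, hz, by rw [hlab, hla, mul_assoc]⟩

end Absorption

variable {ι κ : Type*}

lemma trivIndep_iff {R : Type*} [Ring R] {Φ : R → ℂ} {T : κ → Set R} :
    TrivIndep Φ T ↔ ∀ l, IsReduced T l → 2 ≤ l.length → Φ (wordProd l) = 0 := by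
  constructor
  · intro h l hl hlen
    obtain ⟨n, hn⟩ := Nat.exists_eq_add_of_le' hlen
    obtain ⟨idx, f, rfl⟩ := exists_eq_ofFn hn
    rw [isReduced_ofFn] at hl
    rw [wordProd_ofFn]
    exact h n idx f hl.1 hl.2
  · intro h n idx f hidx hf
    rw [← wordProd_ofFn idx f]
    exact h _ (isReduced_ofFn.2 ⟨hidx, hf⟩) (by simp)

variable {φ Φ : B →ₗ[ℂ] ℂ} {Ai : ι → Subalgebra ℂ B} {Fj : κ → NonUnitalSubalgebra ℂ B}


theorem reducedWordRule_of_cyclicAntimonotone (hφ1 : φ 1 = 1)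
    (hfree : IsFreeFamily ⇑φ (fun i => (Ai i : Set B)))
    (hca : CyclicAntimonotone ⇑φ ⇑Φ (Algebra.adjoin ℂ (⋃ i, (Ai i : Set B)) : Set B)
      (NonUnitalAlgebra.adjoin ℂ (⋃ j, (Fj j : Set B)) : Set B))
    (htriv : TrivIndep ⇑Φ (fun j => (Fj j : Set B))) :
    ReducedWordRule ⇑φ ⇑Φ (centered φ Ai) (fun j => (Fj j : Set B)) := by
  obtain ⟨hone, htwo⟩ := (cyclicAntimonotone_iff hφ1).1 hca
  have hA : ∀ i, ∀ a ∈ centered φ Ai i, a ∈ Algebra.adjoin ℂ (⋃ i, (Ai i : Set B)) :=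
    fun i a ha => Algebra.subset_adjoin (Set.mem_iUnion_of_mem i ha.1)
  have hF : ∀ j, ∀ f ∈ Fj j, f ∈ NonUnitalAlgebra.adjoin ℂ (⋃ j, (Fj j : Set B)) :=
    fun j f hf => NonUnitalAlgebra.subset_adjoin ℂ (Set.mem_iUnion_of_mem j hf)
  refine ⟨fun l hl hcount => ?_, fun u v hu hv j f hf =>
    hone _ (hu.wordProd_mem hA) f (hF j f hf) _ (hv.wordProd_mem hA)⟩
  obtain ⟨x, f, u, f', y, hne, rfl⟩ | ⟨u, b, v, rfl⟩ := exists_separated_or_eq_block l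
  · have hletter : ∀ k, ∀ c ∈ Sum.elim (centered φ Ai) (fun j => (Fj j : Set B)) k,
        c ∈ Submonoid.closure ((Algebra.adjoin ℂ (⋃ i, (Ai i : Set B)) : Set B) ∪
          (NonUnitalAlgebra.adjoin ℂ (⋃ j, (Fj j : Set B)) : Set B)) := by
      rintro (i | j) c hc
      · exact Submonoid.subset_closure (.inl (hA i c hc))
      · exact Submonoid.subset_closure (.inr (hF j c hc))
    obtain ⟨hx, hfuf'y, -⟩ := isReduced_append.1 hl
    obtain ⟨hf, huf'y, -⟩ := isReduced_append.1 hfuf'y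
    obtain ⟨hu, hf'y, -⟩ := isReduced_append.1 huf'y
    obtain ⟨hf', hy, -⟩ := isReduced_append.1 hf'y
    rw [isReduced_inrWord, isReduced_singleton] at hf hf'
    rw [isReduced_inlWord] at hu
    have hremove := htwo _ (hx.wordProd_mem hletter) f.2 (hF _ _ hf) _ (hu.wordProd_mem hA)
      f'.2 (hF _ _ hf') _ (hy.wordProd_mem hletter)
    rw [isFreeFamily_iff.1 hfree u hu hne, zero_mul] at hremove
    simpa [mul_assoc] using hremove
  · simp only [inrCount_append, inrCount_inlWord, inrCount_inrWord, zero_add, add_zero] at hcount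
    have hb : b ≠ [] := by rintro rfl; simp at hcount
    obtain ⟨hu, hbT, hv⟩ := (isReduced_inlWord_append_inrWord_append_inlWord hb).1 hl
    have hvanish : Φ (wordProd b) = 0 := trivIndep_iff.1 htriv b hbT hcount
    have hbF := wordProd_mem_of_ne_nil (fun p hp => hF p.1 p.2 (hbT.2 p hp)) hb
    have hblock := hone _ (hu.wordProd_mem hA) _ hbF _ (hv.wordProd_mem hA)
    simpa [hvanish, mul_assoc] using hblock


lemma sub_smul_one_mem_span_wordProd (hφ1 : φ 1 = 1)
    (hfree : IsFreeFamily ⇑φ (fun i => (Ai i : Set B))) {a : B}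
    (ha : a ∈ Algebra.adjoin ℂ (⋃ i, (Ai i : Set B))) :
    a - φ a • 1 ∈ Submodule.span ℂ (wordProd '' {l | IsReduced (centered φ Ai) l ∧ l ≠ []}) := by
  have hle : reducedSpan φ Ai ≤
      (Submodule.span ℂ (wordProd '' {l | IsReduced (centered φ Ai) l ∧ l ≠ []})).comap
        (LinearMap.id - φ.smulRight 1) := by
    refine Submodule.span_le.2 (Set.image_subset_iff.2 fun l hl => ?_)
    obtain rfl | hne := eq_or_ne l []
    · simp [hφ1]
    · simpa [isFreeFamily_iff.1 hfree l hl hne] using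
        Submodule.subset_span (R := ℂ) (Set.mem_image_of_mem wordProd (And.intro hl hne))
  exact hle (adjoin_le_reducedSpan hφ1 ha)

lemma map_mul_mul_eq_of_mem_span {s t u : Set B}
    (h : ∀ a ∈ s, ∀ f ∈ t, ∀ a' ∈ u, Φ (a * f * a') = φ (a * a') * Φ f) {a f a' : B}
    (ha : a ∈ Submodule.span ℂ s) (hf : f ∈ Submodule.span ℂ t)
    (ha' : a' ∈ Submodule.span ℂ u) : Φ (a * f * a') = φ (a * a') * Φ f := by
  induction ha using Submodule.span_induction with
  | zero => simp
  | add a b _ _ iha ihb => simp only [add_mul, map_add, iha, ihb]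
  | smul c a _ iha => simp only [smul_mul_assoc, map_smul, smul_eq_mul, iha, mul_assoc (c : ℂ)]
  | mem a ha =>
    induction hf using Submodule.span_induction with
    | zero => simp
    | add f g _ _ ihf ihg => simp only [mul_add, add_mul, map_add, ihf, ihg]
    | smul c f _ ihf =>
      simp only [mul_smul_comm, smul_mul_assoc, map_smul, smul_eq_mul, ihf, mul_left_comm]
    | mem f hf =>
      induction ha' using Submodule.span_induction with
      | zero => simp
      | add a' b _ _ iha ihb => simp only [mul_add, map_add, iha, ihb, add_mul]
      | smul c a' _ iha => simp only [mul_smul_comm, map_smul, smul_eq_mul, iha, mul_assoc (c : ℂ)]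
      | mem a' ha' => exact h a ha f hf a' ha'

namespace ReducedWordRule

variable {R : Type*} [Ring R] {φ Φ : R → ℂ} {S : ι → Set R} {T : κ → Set R}

lemma trivIndep (h : ReducedWordRule φ Φ S T) : TrivIndep Φ T :=
  trivIndep_iff.2 fun l hl hlen => by
    simpa using h.map_eq_zero (inrWord l) (isReduced_inrWord.2 hl) (by simpa using hlen)

lemma map_wordProd_mul_mul_wordProd (h : ReducedWordRule φ Φ S T)
    (hT : ∀ j, ∀ f ∈ T j, ∀ g ∈ T j, f * g ∈ T j) {u v : List (ι × R)} (hu : IsReduced S u)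
    (hv : IsReduced S v) {f : R} (hf : f ∈ Subsemigroup.closure (⋃ j, T j)) :
    Φ (wordProd u * f * wordProd v) = φ (wordProd u * wordProd v) * Φ f := by
  obtain ⟨j, g, b, hb, hprod⟩ :=
    (isReduced_nil T).exists_cons_eq_mul_of_mem_closure (e := id) hT hf
  obtain rfl : f = wordProd ((j, g) :: b) := by simpa using hprod.symm
  rcases b with _ | ⟨p, b⟩
  · simpa using h.map_eq_mul u v hu hv j g (isReduced_singleton.1 hb)
  · have hblock := h.map_eq_zero _
      ((isReduced_inlWord_append_inrWord_append_inlWord (by simp)).2 ⟨hu, hb, hv⟩)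
      (by simp [inrCount_append])
    have hvanish : Φ (wordProd ((j, g) :: p :: b)) = 0 :=
      trivIndep_iff.1 h.trivIndep _ hb (by simp)
    rw [hvanish, mul_zero, ← hblock]
    simp [mul_assoc]

lemma map_eq_zero_of_separated (h : ReducedWordRule φ Φ S T)
    (hT : ∀ j, ∀ f ∈ T j, ∀ g ∈ T j, f * g ∈ T j) {x y : List ((ι ⊕ κ) × R)} {w : List (ι × R)}
    (hx : IsReduced (Sum.elim S T) x) (hw : IsReduced S w) (hne : w ≠ [])
    (hy : IsReduced (Sum.elim S T) y) {f f' : R} (hf : f ∈ Subsemigroup.closure (⋃ j, T j))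
    (hf' : f' ∈ Subsemigroup.closure (⋃ j, T j)) :
    Φ (wordProd x * f * wordProd w * f' * wordProd y) = 0 := by
  have hTe : (⋃ j, T j) = ⋃ j, Sum.elim S T (.inr j) := rfl
  rw [hTe] at hf hf'
  obtain ⟨j, g, x', hx', hxf⟩ := hx.exists_append_eq_mul_of_mem_closure (e := Sum.inr) hT hf
  obtain ⟨j', g', y', hy', hf'y⟩ := hy.exists_cons_eq_mul_of_mem_closure (e := Sum.inr) hT hf'
  obtain ⟨p, w, rfl⟩ := List.exists_cons_of_ne_nil hne
  have hwy : IsReduced (Sum.elim S T) (inlWord (p :: w) ++ (.inr j', g') :: y') :=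
    isReduced_append.2 ⟨isReduced_inlWord.2 hw, hy', fun q hq q' hq' => by
      obtain rfl : (.inr j', g') = q' := by simpa using hq'
      exact fst_ne_fst_of_isLeft_of_isRight
        (isLeft_of_mem_inlWord (List.mem_of_getLast? hq)) rfl⟩
  have hvanish := h.map_eq_zero (x' ++ [(.inr j, g)] ++ (inlWord (p :: w) ++ (.inr j', g') :: y'))
    (isReduced_append.2 ⟨hx', hwy, by simp [inlWord]⟩)
    (by simp only [inrCount, List.countP_append, List.countP_cons]; simp; lia)
  rw [wordProd_append, wordProd_append (inlWord _), hxf, hf'y, wordProd_inlWord] at hvanish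
  simpa only [mul_assoc] using hvanish

end ReducedWordRule

lemma mem_span_closure_of_mem_adjoin {f : B}
    (hf : f ∈ NonUnitalAlgebra.adjoin ℂ (⋃ j, (Fj j : Set B))) :
    f ∈ Submodule.span ℂ (Subsemigroup.closure (⋃ j, (Fj j : Set B)) : Set B) := by
  rw [← NonUnitalAlgebra.adjoin_eq_span]
  exact hf

lemma mem_span_wordProd_of_mem_closure (hφ1 : φ 1 = 1) (hφFj : ∀ j, ∀ f ∈ Fj j, φ f = 0) {x : B}
    (hx : x ∈ Submonoid.closure ((Algebra.adjoin ℂ (⋃ i, (Ai i : Set B)) : Set B) ∪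
      (NonUnitalAlgebra.adjoin ℂ (⋃ j, (Fj j : Set B)) : Set B))) :
    x ∈ Submodule.span ℂ
      (wordProd '' {l | IsReduced (Sum.elim (centered φ Ai) (fun j => (Fj j : Set B))) l}) := by
  rw [← centered_mixedFamily hφ1 hφFj]
  refine adjoin_le_reducedSpan hφ1 ?_
  have hsub : ∀ k, (mixedFamily Ai Fj k : Set B) ⊆
      Algebra.adjoin ℂ (⋃ k, (mixedFamily Ai Fj k : Set B)) := fun k =>
    (Set.subset_iUnion (fun k => (mixedFamily Ai Fj k : Set B)) k).trans Algebra.subset_adjoin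
  refine (Submonoid.closure_le (S := (Algebra.adjoin ℂ _).toSubmonoid)).2
    (Set.union_subset ?_ ?_) hx
  · exact Algebra.adjoin_le (Set.iUnion_subset fun i => hsub (.inl i))
  · exact NonUnitalAlgebra.adjoin_le (S := (Algebra.adjoin ℂ _).toNonUnitalSubalgebra)
      (Set.iUnion_subset fun j => Algebra.subset_adjoin.trans (hsub (.inr j)))

open scoped Pointwise in
theorem ReducedWordRule.cyclicAntimonotone
    (h : ReducedWordRule ⇑φ ⇑Φ (centered φ Ai) (fun j => (Fj j : Set B))) (hφ1 : φ 1 = 1)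
    (hfree : IsFreeFamily ⇑φ (fun i => (Ai i : Set B))) (hφFj : ∀ j, ∀ f ∈ Fj j, φ f = 0) :
    CyclicAntimonotone ⇑φ ⇑Φ (Algebra.adjoin ℂ (⋃ i, (Ai i : Set B)) : Set B)
      (NonUnitalAlgebra.adjoin ℂ (⋃ j, (Fj j : Set B)) : Set B) := by
  have hT : ∀ j, ∀ f ∈ (Fj j : Set B), ∀ g ∈ (Fj j : Set B), f * g ∈ (Fj j : Set B) :=
    fun j _ hf _ hg => mul_mem hf hg
  refine (cyclicAntimonotone_iff hφ1).2 ⟨fun a ha f hf a' ha' => ?_,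
    fun x hx f hf a ha f' hf' y hy => ?_⟩
  · refine map_mul_mul_eq_of_mem_span ?_ (adjoin_le_reducedSpan hφ1 ha)
      (mem_span_closure_of_mem_adjoin hf) (adjoin_le_reducedSpan hφ1 ha')
    rintro _ ⟨u, hu, rfl⟩ g hg _ ⟨v, hv, rfl⟩
    exact h.map_wordProd_mul_mul_wordProd hT hu hv hg
  · have hspan := Submodule.mul_mem_mul (Submodule.mul_mem_mul (Submodule.mul_mem_mul
      (Submodule.mul_mem_mul (mem_span_wordProd_of_mem_closure hφ1 hφFj hx)
        (mem_span_closure_of_mem_adjoin hf)) (sub_smul_one_mem_span_wordProd hφ1 hfree ha))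
      (mem_span_closure_of_mem_adjoin hf')) (mem_span_wordProd_of_mem_closure hφ1 hφFj hy)
    simp only [Submodule.span_mul_span] at hspan
    have hvanish : Φ (x * f * (a - φ a • 1) * f' * y) = 0 := by
      refine (Submodule.span_le (p := LinearMap.ker Φ)).2 ?_ hspan
      rintro _ ⟨_, ⟨_, ⟨_, ⟨_, ⟨l, hl, rfl⟩, g, hg, rfl⟩, _, ⟨w, ⟨hw, hne⟩, rfl⟩, rfl⟩,
        g', hg', rfl⟩, _, ⟨m, hm, rfl⟩, rfl⟩
      exact h.map_eq_zero_of_separated hT hl hw hne hm hg hg'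
    simpa [mul_sub, sub_mul, sub_eq_zero] using hvanish

end CyclicAntimonotoneAndTrivial

theorem cyclicAntimonotone_and_trivIndep_iff_reducedWordRule {ι κ : Type*} {φ Φ : B →ₗ[ℂ] ℂ}
    {Ai : ι → Subalgebra ℂ B} {Fj : κ → NonUnitalSubalgebra ℂ B} (hφ1 : φ 1 = 1)
    (hfree : IsFreeFamily ⇑φ (fun i => (Ai i : Set B))) (hφFj : ∀ j, ∀ f ∈ Fj j, φ f = 0) :
    CyclicAntimonotone ⇑φ ⇑Φ (Algebra.adjoin ℂ (⋃ i, (Ai i : Set B)) : Set B)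
        (NonUnitalAlgebra.adjoin ℂ (⋃ j, (Fj j : Set B)) : Set B) ∧
      TrivIndep ⇑Φ (fun j => (Fj j : Set B)) ↔
    ReducedWordRule ⇑φ ⇑Φ (centered φ Ai) (fun j => (Fj j : Set B)) :=
  ⟨fun ⟨hca, htriv⟩ => reducedWordRule_of_cyclicAntimonotone hφ1 hfree hca htriv,
    fun h => ⟨h.cyclicAntimonotone hφ1 hfree hφFj, h.trivIndep⟩⟩

theorem statement3_general (A : Subalgebra ℂ B) (F : TwoSidedIdeal B) (φ Φ φ' : B →ₗ[ℂ] ℂ)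
    (hφ1 : φ 1 = 1) (hφF : ∀ f ∈ F, φ f = 0)
    (hφ'A : ∀ a ∈ A, φ' a = 0) (hφ'F : ∀ f ∈ F, φ' f = Φ f)
    {ι κ : Type*} (Ai : ι → Subalgebra ℂ B) (hAi : ∀ i, Ai i ≤ A)
    (Fj : κ → NonUnitalSubalgebra ℂ B) (hFj : ∀ j, ∀ f ∈ Fj j, f ∈ F) :
    (IsFreeFamily ⇑φ (fun i => (Ai i : Set B)) ∧
      CyclicAntimonotone ⇑φ ⇑Φ
        (Algebra.adjoin ℂ (⋃ i, (Ai i : Set B)) : Set B)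
        (NonUnitalAlgebra.adjoin ℂ (⋃ j, (Fj j : Set B)) : Set B) ∧
      TrivIndep ⇑Φ (fun j => (Fj j : Set B))) ↔
    IsInfFree ⇑φ ⇑φ'
      (Sum.elim (fun i => (Ai i : Set B)) (fun j => unitize (Fj j : Set B))) := by
  have hφFj : ∀ j, ∀ f ∈ Fj j, φ f = 0 := fun j f hf => hφF f (hFj j f hf)
  rw [← coe_mixedFamily, isInfFree_iff_leibniz hφ1, isFreeFamily_mixedFamily_iff hφ1 hφF hFj,
    centered_mixedFamily hφ1 hφFj,
    leibniz_iff_reducedWordRule (fun i a ha => hAi i ha.1) hFj hφF hφ'A hφ'F]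
  exact and_congr_right fun hfree =>
    cyclicAntimonotone_and_trivIndep_iff_reducedWordRule hφ1 hfree hφFj

theorem statement3
    {B : Type*} [Ring B] [Algebra ℂ B]
    (A : Subalgebra ℂ B) (F : Submodule ℂ B)
    (hFmulL : ∀ b : B, ∀ f ∈ F, b * f ∈ F)
    (hFmulR : ∀ b : B, ∀ f ∈ F, f * b ∈ F)
    (hAF : ∀ x ∈ A, x ∈ F → x = 0)
    (hdec : ∀ x : B, ∃ a ∈ A, ∃ f ∈ F, x = a + f)
    (φ Φ φ' : B →ₗ[ℂ] ℂ)
    (hφ1 : φ 1 = 1) (hφF : ∀ f ∈ F, φ f = 0)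
    (hφ'A : ∀ a ∈ A, φ' a = 0) (hφ'F : ∀ f ∈ F, φ' f = Φ f)
    {ι κ : Type*}
    (Ai : ι → Subalgebra ℂ B) (hAi : ∀ i, Ai i ≤ A)
    (Fj : κ → NonUnitalSubalgebra ℂ B) (hFj : ∀ j, ∀ f ∈ Fj j, f ∈ F) :
    (IsFreeFamily ⇑φ (fun i => (Ai i : Set B)) ∧
      CyclicAntimonotone ⇑φ ⇑Φ
        (Algebra.adjoin ℂ (⋃ i, (Ai i : Set B)) : Set B)
        (NonUnitalAlgebra.adjoin ℂ (⋃ j, (Fj j : Set B)) : Set B) ∧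
      TrivIndep ⇑Φ (fun j => (Fj j : Set B))) ↔
    IsInfFree ⇑φ ⇑φ'
      (Sum.elim (fun i => (Ai i : Set B))
        (fun j => unitize (Fj j : Set B))) :=
  statement3_general A
    (.mk' F F.zero_mem F.add_mem F.neg_mem (hFmulL _ _) (hFmulR _ _)) φ Φ φ' hφ1
    (by simpa using hφF) hφ'A (by simpa using hφ'F) Ai hAi Fj (by simpa using hFj)

end TypeBPrime
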